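/- Let p_1, ..., p_k be pairwise distinct nonzero integral polynomials. Then for every colouring χ: ℤ → C of the integers with an arbitrary (possibly infinite) set C of colours, there exist a, d ∈ ℤ with d ≠ 0 such that either χ takes the same value on all of a, a+p_1(d), ..., a+p_k(d), or the integers a, a+p_1(d), ..., a+p_k(d) are pairwise distinct and χ takes pairwise distinct values on them. -/

import Mathlib

namespace CPV
open Polynomial

def Good {G : Type*} [Group G] (F : Set (ℕ → G)) : Prop :=
  ∀ r : ℕ, ∃ (W : Finset G) (N : Finset ℕ), (∀ t ∈ N, 0 < t) ∧
    ∀ c : G → Fin r, ∃ x ∈ W, ∃ t ∈ N, ∀ f ∈ F, c (f t * x) = c x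

def stepFam {G : Type*} [Group G] (F : Set (ℕ → G)) (f0 : ℕ → G) (W : Finset G) (N : Finset ℕ) :
    Set (ℕ → G) :=
  {g | ∃ f ∈ F, ∃ T ∈ N, ∃ x ∈ W, g = fun t => x⁻¹ * (f T)⁻¹ * f (T + t) * (f0 t)⁻¹ * x}

lemma Good.finite_colors {G : Type*} [Group G] {F : Set (ℕ → G)} (h : Good F)
    (K : Type*) [Finite K] :
    ∃ (W : Finset G) (N : Finset ℕ), (∀ t ∈ N, 0 < t) ∧
    ∀ c : G → K, ∃ x ∈ W, ∃ t ∈ N, ∀ f ∈ F, c (f t * x) = c x := by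
  obtain ⟨n, ⟨e⟩⟩ := Finite.exists_equiv_fin K
  obtain ⟨W, N, hN, H⟩ := h n
  refine ⟨W, N, hN, fun c => ?_⟩
  obtain ⟨x, hx, t, ht, hh⟩ := H (fun g => e (c g))
  exact ⟨x, hx, t, ht, fun f hf => e.injective (hh f hf)⟩

lemma focus {G : Type*} [Group G] (F : Set (ℕ → G)) (hF : F.Finite) (f0 : ℕ → G) (hf0 : f0 ∈ F)
    (h1 : ∀ f ∈ F, f 0 = 1)
    (h : ∀ (W : Finset G) (N : Finset ℕ), Good (stepFam F f0 W N)) (r s : ℕ) :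
    ∃ (W : Finset G) (N : Finset ℕ), (∀ t ∈ N, 0 < t) ∧
    ∀ c : G → Fin r, (∃ x ∈ W, ∃ t ∈ N, ∀ f ∈ F, c (f t * x) = c x) ∨
      (∃ x ∈ W, ∃ T : Fin s → ℕ, (∀ i, T i ∈ N) ∧ ∃ κ : Fin s → Fin r, Function.Injective κ ∧
        ∀ i, ∀ f ∈ F, c (f (T i) * x) = κ i) := by
  classical
  induction s with
  | zero =>
    refine ⟨{1}, ∅, by simp, fun c => Or.inr ⟨1, by simp, Fin.elim0, fun i => i.elim0,
      Fin.elim0, fun i => i.elim0, fun i => i.elim0⟩⟩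
  | succ s ih =>
    obtain ⟨W, N, hN, H⟩ := ih
    let K : Finset G := (hF.toFinset ×ˢ (insert 0 N) ×ˢ W).image (fun p => p.1 p.2.1 * p.2.2)
    have hK : ∀ f ∈ F, ∀ T ∈ insert 0 N, ∀ x ∈ W, f T * x ∈ K := by
      intro f hf T hT x hx
      refine Finset.mem_image.2 ⟨(f, T, x), ?_, rfl⟩
      simp only [Finset.mem_product, Set.Finite.mem_toFinset]
      exact ⟨hf, hT, hx⟩
    obtain ⟨W1, N1, hN1, H1⟩ := (h W (insert 0 N)).finite_colors (K → Fin r)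
    refine ⟨(W ×ˢ W1).image (fun p => p.1 * p.2) ∪
      (W ×ˢ W1 ×ˢ N1).image (fun p => (f0 p.2.2)⁻¹ * p.1 * p.2.1),
      N ∪ N1 ∪ (N ×ˢ N1).image (fun p => p.1 + p.2), ?_, fun c => ?_⟩
    · intro t ht
      simp only [Finset.mem_union, Finset.mem_image, Finset.mem_product, Prod.exists] at ht
      rcases ht with (ht | ht) | ⟨a, b, ⟨ha, hb⟩, rfl⟩
      · exact hN t ht
      · exact hN1 t ht
      · have := hN a ha
        omega
    obtain ⟨z, hz, t, ht, hh⟩ := H1 (fun g w => c (w.1 * g))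
    have key : ∀ f ∈ F, ∀ f' ∈ F, ∀ T ∈ insert 0 N, ∀ T' ∈ insert 0 N, ∀ x ∈ W,
        c (f' T' * x * (x⁻¹ * (f T)⁻¹ * f (T + t) * (f0 t)⁻¹ * x * z)) = c (f' T' * x * z) := by
      intro f hf f' hf' T hT T' hT' x hx
      have := hh _ ⟨f, hf, T, hT, x, hx, rfl⟩
      exact congrFun this ⟨f' T' * x, hK f' hf' T' hT' x hx⟩
    have hxz : ∀ x ∈ W, x * z ∈ (W ×ˢ W1).image (fun p => p.1 * p.2) ∪
      (W ×ˢ W1 ×ˢ N1).image (fun p => (f0 p.2.2)⁻¹ * p.1 * p.2.1) := by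
      intro x hx
      exact Finset.mem_union_left _ (Finset.mem_image.2 ⟨(x, z), by simp [hx, hz], rfl⟩)
    rcases H (fun g => c (g * z)) with ⟨x, hx, t', ht', hm⟩ | ⟨x, hx, T, hT, κ, hκ, hm⟩
    · left
      refine ⟨x * z, hxz x hx, t', by simp [ht'], fun f hf => ?_⟩
      rw [← mul_assoc]; exact hm f hf
    by_cases hi : ∃ i, κ i = c (x * z)
    · obtain ⟨i, hi⟩ := hi
      left
      refine ⟨x * z, hxz x hx, T i, by simp [hT i], fun f hf => ?_⟩
      rw [← mul_assoc, ← hi]; exact hm i f hf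
    right
    push Not at hi
    refine ⟨(f0 t)⁻¹ * x * z, ?_, Fin.cons t (fun i => T i + t), ?_,
      Fin.cons (c (x * z)) κ, ?_, ?_⟩
    · exact Finset.mem_union_right _ (Finset.mem_image.2 ⟨(x, z, t), by simp [hx, hz, ht], rfl⟩)
    · intro i
      refine Fin.cases ?_ (fun i => ?_) i
      · simp [ht]
      · simp only [Fin.cons_succ]
        exact Finset.mem_union_right _ (Finset.mem_image.2 ⟨(T i, t), by simp [hT i, ht], rfl⟩)
    · rw [Fin.cons_injective_iff]
      exact ⟨fun ⟨i, h⟩ => hi i h, hκ⟩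
    · intro i
      refine Fin.cases ?_ (fun i => ?_) i
      · intro f hf
        simp only [Fin.cons_zero]
        have := key f hf f0 hf0 0 (by simp) 0 (by simp) x hx
        rw [h1 f hf, h1 f0 hf0, zero_add, one_mul] at this
        rw [← this]; congr 1; group
      · intro f hf
        simp only [Fin.cons_succ]
        have := key f hf f hf (T i) (by simp [hT i]) (T i) (by simp [hT i]) x hx
        rw [← hm i f hf, ← this]; congr 1; group

lemma good_step {G : Type*} [Group G] (F : Set (ℕ → G)) (hF : F.Finite) (f0 : ℕ → G) (hf0 : f0 ∈ F)
    (h1 : ∀ f ∈ F, f 0 = 1)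
    (h : ∀ (W : Finset G) (N : Finset ℕ), Good (stepFam F f0 W N)) : Good F := by
  intro r
  obtain ⟨W, N, hN, H⟩ := focus F hF f0 hf0 h1 h r (r + 1)
  refine ⟨W, N, hN, fun c => ?_⟩
  rcases H c with H | ⟨x, hx, T, hT, κ, hκ, hm⟩
  · exact H
  · have := Fintype.card_le_of_injective κ hκ
    simp at this

/-- pairs `(R, k)` acting by `(a, d) ↦ (a + R d, d + k)` -/
@[ext] structure AG (A : Type*) [CommRing A] where
  R : A[X]
  k : A

namespace AG
variable {A B : Type*} [CommRing A] [CommRing B]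

noncomputable instance : Mul (AG A) := ⟨fun g h => ⟨h.R + taylor h.k g.R, g.k + h.k⟩⟩
noncomputable instance : One (AG A) := ⟨⟨0, 0⟩⟩
noncomputable instance : Inv (AG A) := ⟨fun g => ⟨-taylor (-g.k) g.R, -g.k⟩⟩
@[simp] lemma mul_R (g h : AG A) : (g * h).R = h.R + taylor h.k g.R := rfl
@[simp] lemma mul_k (g h : AG A) : (g * h).k = g.k + h.k := rfl
@[simp] lemma one_R : (1 : AG A).R = 0 := rfl
@[simp] lemma one_k : (1 : AG A).k = 0 := rfl
@[simp] lemma inv_R (g : AG A) : (g⁻¹).R = -taylor (-g.k) g.R := rfl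
@[simp] lemma inv_k (g : AG A) : (g⁻¹).k = -g.k := rfl

noncomputable instance : Group (AG A) := Group.ofLeftAxioms
  (by intro a b c
      ext1
      · simp only [mul_R, mul_k, map_add, taylor_taylor]
        rw [add_comm c.k b.k]; ring
      · simp [add_assoc])
  (by intro a; ext1 <;> simp)
  (by intro a; ext1 <;> simp [taylor_taylor])

lemma map_taylor' (φ : A →+* B) (r : A) (f : A[X]) :
    (taylor r f).map φ = taylor (φ r) (f.map φ) := by
  simp [taylor_apply, Polynomial.map_comp]

noncomputable def map (φ : A →+* B) : AG A →* AG B where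
  toFun g := ⟨g.R.map φ, φ g.k⟩
  map_one' := by ext1 <;> simp
  map_mul' g h := by ext1 <;> simp [map_taylor']

@[simp] lemma map_R (φ : A →+* B) (g : AG A) : (map φ g).R = g.R.map φ := rfl
@[simp] lemma map_k (φ : A →+* B) (g : AG A) : (map φ g).k = φ g.k := rfl

lemma map_map {D : Type*} [CommRing D] (φ : A →+* B) (ψ : B →+* D) (g : AG A) :
    map ψ (map φ g) = map (ψ.comp φ) g := by
  ext1 <;> simp [Polynomial.map_map]
lemma map_id (g : AG A) : map (RingHom.id A) g = g := by
  ext1 <;> simp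
end AG

noncomputable def ev (t : ℕ) : AG ℤ[X] →* AG ℤ := AG.map (evalRingHom (t : ℤ))
noncomputable def tayHom (T : ℤ) : ℤ[X] →+* ℤ[X] := (taylorAlgHom T).toRingHom
@[simp] lemma tayHom_apply (T : ℤ) (f : ℤ[X]) : tayHom T f = taylor T f := rfl
noncomputable def sh (T : ℕ) : AG ℤ[X] →* AG ℤ[X] := AG.map (tayHom (T : ℤ))
noncomputable def cst : AG ℤ →* AG ℤ[X] := AG.map C

lemma ev_cst (t : ℕ) (x : AG ℤ) : ev t (cst x) = x := by
  rw [ev, cst, AG.map_map]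
  convert AG.map_id x
  ext a
  simp
lemma ev_sh (t T : ℕ) (f : AG ℤ[X]) : ev t (sh T f) = ev (T + t) f := by
  rw [ev, sh, AG.map_map, ev]
  have : (evalRingHom (t : ℤ)).comp (tayHom (T : ℤ)) = evalRingHom ((T + t : ℕ) : ℤ) := by
    refine RingHom.ext fun a => ?_
    simp [taylor_eval, add_comm]
  rw [this]

noncomputable def hstep (f f0 : AG ℤ[X]) (T : ℕ) (x : AG ℤ) : AG ℤ[X] :=
  (cst x)⁻¹ * (cst (ev T f))⁻¹ * sh T f * f0⁻¹ * cst x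

lemma ev_hstep (f f0 : AG ℤ[X]) (T : ℕ) (x : AG ℤ) (t : ℕ) :
    ev t (hstep f f0 T x) = x⁻¹ * (ev T f)⁻¹ * ev (T + t) f * (ev t f0)⁻¹ * x := by
  simp [hstep, ev_cst, ev_sh]

def Lev := WithTop ℕ ×ₗ ℕ
noncomputable instance : LinearOrder Lev := inferInstanceAs (LinearOrder (WithTop ℕ ×ₗ ℕ))
instance : WellFoundedLT Lev := inferInstanceAs (WellFoundedLT (WithTop ℕ ×ₗ ℕ))

def lv (m : WithTop ℕ) (j : ℕ) : Lev := toLex (m, j)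

lemma lv_lt {m m' : WithTop ℕ} {j j' : ℕ} : lv m j < lv m' j' ↔ m < m' ∨ m = m' ∧ j < j' :=
  Prod.Lex.toLex_lt_toLex

lemma lev_cases (l : Lev) : (∃ j, l = lv ⊤ j) ∨ ∃ (m : ℕ) (j : ℕ), l = lv m j := by
  obtain ⟨m, j⟩ : WithTop ℕ × ℕ := l
  induction m using WithTop.recTopCoe with
  | top => exact Or.inl ⟨j, rfl⟩
  | coe m => exact Or.inr ⟨m, j, rfl⟩

noncomputable def coef0 (f : AG ℤ[X]) : WithTop ℕ → ℤ[X]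
  | ⊤ => f.k
  | (m : ℕ) => f.R.coeff m

noncomputable def coef (f : AG ℤ[X]) (l : Lev) : ℤ := (coef0 f (ofLex l).1).coeff (ofLex l).2

@[simp] lemma coef_top (f : AG ℤ[X]) (j : ℕ) : coef f (lv ⊤ j) = f.k.coeff j := rfl
@[simp] lemma coef_coe (f : AG ℤ[X]) (m j : ℕ) : coef f (lv m j) = (f.R.coeff m).coeff j := rfl

lemma coeff_zero_of_ev {f : AG ℤ[X]} (h : ev 0 f = 1) : f.k.coeff 0 = 0 ∧
    ∀ m, (f.R.coeff m).coeff 0 = 0 := by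
  constructor
  · have := congrArg AG.k h
    simpa [ev, coeff_zero_eq_eval_zero] using this
  · intro m
    have := congrArg (fun g => (AG.R g).coeff m) h
    simpa [ev, coeff_zero_eq_eval_zero] using this

lemma taylor_top {A : Type*} [CommRing A] (r : A) (f : A[X]) (n : ℕ) (h : ∀ m > n, f.coeff m = 0) :
    (∀ m > n, (taylor r f).coeff m = 0) ∧ (taylor r f).coeff n = f.coeff n := by
  have hd : f.natDegree ≤ n := natDegree_le_iff_coeff_eq_zero.2 h
  constructor
  · intro m hm
    exact coeff_eq_zero_of_natDegree_lt (by rw [natDegree_taylor]; omega)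
  · rcases hd.lt_or_eq with hd | rfl
    · rw [coeff_eq_zero_of_natDegree_lt hd, coeff_eq_zero_of_natDegree_lt]
      rwa [natDegree_taylor]
    · exact coeff_taylor_natDegree ..

lemma hstep_k (f f0 : AG ℤ[X]) (T : ℕ) (x : AG ℤ) :
    (hstep f f0 T x).k = taylor (T : ℤ) f.k - C (f.k.eval (T : ℤ)) - f0.k := by
  simp [hstep, cst, ev, sh]
  ring

lemma hstep_R (f f0 : AG ℤ[X]) (T : ℕ) (x : AG ℤ) (hf : f.k = 0) (hf0 : f0.k = 0) :
    (hstep f f0 T x).R = taylor (C x.k) (f.R.map (tayHom (T : ℤ))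
      - (f.R.map (evalRingHom (T : ℤ))).map C - f0.R) := by
  simp [hstep, cst, ev, sh, hf, hf0, taylor_taylor]
  ring

lemma lemmaK (f f0 : AG ℤ[X]) (T : ℕ) (x : AG ℤ) (hf : ev 0 f = 1) (hf0 : ev 0 f0 = 1) (l : Lev)
    (h : ∀ l' > l, coef f l' = 0) (h0 : ∀ l' > l, coef f0 l' = 0) :
    (∀ l' > l, coef (hstep f f0 T x) l' = 0) ∧
      coef (hstep f f0 T x) l = coef f l - coef f0 l := by
  have hh : ev 0 (hstep f f0 T x) = 1 := by rw [ev_hstep]; simp [hf0]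
  obtain ⟨zf, zf'⟩ := coeff_zero_of_ev hf
  obtain ⟨zf0, zf0'⟩ := coeff_zero_of_ev hf0
  obtain ⟨zh, zh'⟩ := coeff_zero_of_ev hh
  rcases lev_cases l with ⟨j, rfl⟩ | ⟨m, j, rfl⟩
  · have e1 : ∀ j' > j, f.k.coeff j' = 0 := fun j' hj => h (lv ⊤ j') (lv_lt.2 (by simp [hj]))
    have e0 : ∀ j' > j, f0.k.coeff j' = 0 := fun j' hj => h0 (lv ⊤ j') (lv_lt.2 (by simp [hj]))
    obtain ⟨t1, t2⟩ := taylor_top (T : ℤ) f.k j e1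
    constructor
    · intro l' hl'
      rcases lev_cases l' with ⟨j', rfl⟩ | ⟨m, j', rfl⟩
      · have hj' : j < j' := by simpa [lv_lt] using hl'
        rw [coef_top, hstep_k, coeff_sub, coeff_sub, t1 j' hj', e0 j' hj',
          coeff_C_of_ne_zero (by omega)]; simp
      · simp [lv_lt] at hl'
    · rcases Nat.eq_zero_or_pos j with rfl | hj
      · simp [zh, zf, zf0]
      rw [coef_top, hstep_k, coeff_sub, coeff_sub, t2, coeff_C_of_ne_zero (by omega)]; simp
  · have fk : f.k = 0 := by
      ext j'; exact h (lv ⊤ j') (lv_lt.2 (by simp))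
    have fk0 : f0.k = 0 := by
      ext j'; exact h0 (lv ⊤ j') (lv_lt.2 (by simp))
    have fR : ∀ m' > m, f.R.coeff m' = 0 := by
      intro m' hm'; ext j'; exact h (lv m' j') (lv_lt.2 (by simp [hm']))
    have fR0 : ∀ m' > m, f0.R.coeff m' = 0 := by
      intro m' hm'; ext j'; exact h0 (lv m' j') (lv_lt.2 (by simp [hm']))
    have e1 : ∀ j' > j, (f.R.coeff m).coeff j' = 0 :=
      fun j' hj => h (lv m j') (lv_lt.2 (by simp [hj]))
    have e0 : ∀ j' > j, (f0.R.coeff m).coeff j' = 0 :=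
      fun j' hj => h0 (lv m j') (lv_lt.2 (by simp [hj]))
    obtain ⟨t1, t2⟩ := taylor_top (T : ℤ) (f.R.coeff m) j e1
    have hk : (hstep f f0 T x).k = 0 := by rw [hstep_k, fk, fk0]; simp
    have hR := hstep_R f f0 T x fk fk0
    set u := f.R.map (tayHom (T : ℤ))
      - (f.R.map (evalRingHom (T : ℤ))).map C - f0.R with hu
    have uc : ∀ m', u.coeff m' = taylor (T : ℤ) (f.R.coeff m') - C ((f.R.coeff m').eval (T : ℤ))
        - f0.R.coeff m' := by
      intro m'; simp [hu]
    obtain ⟨s1, s2⟩ := taylor_top (C x.k) u m (by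
      intro m' hm'; rw [uc, fR m' hm', fR0 m' hm']; simp)
    rw [← hR] at s1 s2
    constructor
    · intro l' hl'
      rcases lev_cases l' with ⟨j', rfl⟩ | ⟨m', j', rfl⟩
      · simp [hk]
      · rw [gt_iff_lt, lv_lt] at hl'
        rcases hl' with hm | ⟨hm, hj⟩
        · rw [coef_coe, s1 m' (by exact_mod_cast hm)]; simp
        · obtain rfl : m = m' := by exact_mod_cast hm
          rw [coef_coe, s2, uc, coeff_sub, coeff_sub, t1 _ hj, e0 _ hj,
            coeff_C_of_ne_zero (by omega)]; simp
    · rcases Nat.eq_zero_or_pos j with rfl | hj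
      · simp [zh', zf', zf0']
      rw [coef_coe, s2, uc, coeff_sub, coeff_sub, t2, coeff_C_of_ne_zero (by omega)]; simp

lemma exists_lead (f : AG ℤ[X]) (hf : f ≠ 1) :
    ∃ l, coef f l ≠ 0 ∧ ∀ l' > l, coef f l' = 0 := by
  by_cases hk : f.k = 0
  · have hR : f.R ≠ 0 := by
      intro hR; apply hf; ext1 <;> assumption
    refine ⟨lv f.R.natDegree f.R.leadingCoeff.natDegree, ?_, ?_⟩
    · simpa using hR
    · intro l' hl'
      rcases lev_cases l' with ⟨j', rfl⟩ | ⟨m', j', rfl⟩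
      · simp [hk]
      · rw [gt_iff_lt, lv_lt] at hl'
        rcases hl' with hm | ⟨hm, hj⟩
        · have hm' : f.R.natDegree < m' := by exact_mod_cast hm
          have : f.R.coeff m' = 0 := coeff_eq_zero_of_natDegree_lt hm'
          rw [coef_coe, this]; simp
        · have : f.R.natDegree = m' := by exact_mod_cast hm
          subst this
          exact coeff_eq_zero_of_natDegree_lt hj
  · refine ⟨lv ⊤ f.k.natDegree, ?_, ?_⟩
    · simpa using hk
    · intro l' hl'
      rcases lev_cases l' with ⟨j', rfl⟩ | ⟨m', j', rfl⟩
      · rw [coef_top]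
        exact coeff_eq_zero_of_natDegree_lt (by simpa [lv_lt] using hl')
      · simp [lv_lt] at hl'

end CPV

namespace CPV
open Polynomial

def Lead (f : AG ℤ[X]) (p : Lev × ℤ) : Prop :=
  p.2 ≠ 0 ∧ coef f p.1 = p.2 ∧ ∀ l' > p.1, coef f l' = 0

def paths (F : Set (AG ℤ[X])) : Set (ℕ → AG ℤ) := (fun f t => ev t f) '' F

lemma good_diff_one {F : Set (AG ℤ[X])} (h : Good (paths (F \ {1}))) : Good (paths F) := by
  intro r
  obtain ⟨W, N, hN, H⟩ := h r
  refine ⟨W, N, hN, fun c => ?_⟩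
  obtain ⟨x, hx, t, ht, hh⟩ := H c
  refine ⟨x, hx, t, ht, ?_⟩
  rintro _ ⟨f, hf, rfl⟩
  by_cases h1 : f = 1
  · subst h1; simp
  · exact hh _ ⟨f, ⟨hf, h1⟩, rfl⟩

theorem pet (M : Multiset Lev) : ∀ (Cs : Multiset (Lev × ℤ)), Cs.map Prod.fst = M →
    ∀ F : Set (AG ℤ[X]), F.Finite → (∀ f ∈ F, ev 0 f = 1) →
    (∀ f ∈ F, f = 1 ∨ ∃ p ∈ Cs, Lead f p) → Good (paths F) := by
  classical
  have wf : WellFounded (Relation.CutExpand (α := Lev) (· < ·)) :=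
    WellFounded.cutExpand wellFounded_lt
  induction M using wf.induction with
  | _ M ih =>
  intro Cs hCs F hF hF1 hcov
  apply good_diff_one
  by_cases hne : (F \ {1}).Nonempty
  swap
  · rw [Set.not_nonempty_iff_eq_empty] at hne
    intro r
    refine ⟨{1}, {1}, by simp, fun c => ⟨1, by simp, 1, by simp, ?_⟩⟩
    rw [hne]
    rintro _ ⟨f, hf, rfl⟩
    exact hf.elim
  have hcov' : ∀ f ∈ F \ {1}, ∃ p ∈ Cs, Lead f p := by
    intro f hf
    exact (hcov f hf.1).resolve_left hf.2
  let S : Set Lev := {l | ∃ f ∈ F \ {1}, ∃ p ∈ Cs, Lead f p ∧ p.1 = l}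
  have hS : S.Nonempty := by
    obtain ⟨f, hf⟩ := hne
    obtain ⟨p, hp, hl⟩ := hcov' f hf
    exact ⟨p.1, f, hf, p, hp, hl, rfl⟩
  have wl : WellFounded (fun a b : Lev => a < b) := wellFounded_lt
  obtain ⟨f0, hf0, p0, hp0, hl0, hmin0⟩ := wl.min_mem S hS
  have hmin : ∀ f ∈ F \ {1}, ∀ p ∈ Cs, Lead f p → p0.1 ≤ p.1 := by
    intro f hf p hp hl
    rw [hmin0]
    exact not_lt.1 (wl.not_lt_min S ⟨f, hf, p, hp, hl, rfl⟩)
  refine good_step (paths (F \ {1})) ((hF.subset Set.sdiff_subset).image _) (fun t => ev t f0)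
    ⟨f0, hf0, rfl⟩ ?_ ?_
  · rintro _ ⟨f, hf, rfl⟩
    exact hF1 f hf.1
  intro W N
  let F' : Set (AG ℤ[X]) :=
    (fun q : AG ℤ[X] × ℕ × AG ℤ => hstep q.1 f0 q.2.1 q.2.2) '' ((F \ {1}) ×ˢ (N : Set ℕ) ×ˢ (W : Set (AG ℤ)))
  have hF' : F'.Finite :=
    ((hF.subset Set.sdiff_subset).prod (N.finite_toSet.prod W.finite_toSet)).image _
  have hstepeq : stepFam (paths (F \ {1})) (fun t => ev t f0) W N = paths F' := by
    ext g
    constructor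
    · rintro ⟨_, ⟨f, hf, rfl⟩, T, hT, x, hx, rfl⟩
      refine ⟨hstep f f0 T x, ⟨(f, T, x), ⟨hf, hT, hx⟩, rfl⟩, ?_⟩
      funext t
      exact ev_hstep ..
    · rintro ⟨_, ⟨⟨f, T, x⟩, ⟨hf, hT, hx⟩, rfl⟩, rfl⟩
      refine ⟨_, ⟨f, hf, rfl⟩, T, hT, x, hx, ?_⟩
      funext t
      exact ev_hstep ..
  rw [hstepeq]
  have hlead : ∀ f : AG ℤ[X], ∃ p : Lev × ℤ, f ≠ 1 → Lead f p := by
    intro f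
    by_cases h : f = 1
    · exact ⟨p0, fun h' => (h' h).elim⟩
    · obtain ⟨l, h1, h2⟩ := exists_lead f h
      exact ⟨(l, coef f l), fun _ => ⟨h1, rfl, h2⟩⟩
  choose lead hlead using hlead
  let L : Multiset (Lev × ℤ) := ((hF'.toFinset.image lead).filter (fun p => p.1 < p0.1)).val
  let σ : Lev × ℤ → Lev × ℤ := fun p => if p.1 = p0.1 then (p.1, p.2 - p0.2) else p
  have hσ : ∀ p, (σ p).1 = p.1 := by
    intro p; simp only [σ]; split_ifs <;> rfl
  refine ih (((Cs.erase p0).map σ + L).map Prod.fst) ?_ _ rfl F' hF' ?_ ?_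
  · refine ⟨L.map Prod.fst, p0.1, ?_, ?_⟩
    · intro a ha
      obtain ⟨p, hp, rfl⟩ := Multiset.mem_map.1 ha
      exact (Finset.mem_filter.1 hp).2
    · have : M = (Cs.erase p0).map Prod.fst + {p0.1} := by
        rw [← hCs]
        conv_lhs => rw [← Multiset.cons_erase hp0]
        rw [Multiset.map_cons, ← Multiset.singleton_add, add_comm]
      rw [this, Multiset.map_add, Multiset.map_map]
      have e : (Prod.fst ∘ σ) = Prod.fst := funext hσ
      rw [e]
      abel
  · rintro _ ⟨⟨f, T, x⟩, ⟨hf, hT, hx⟩, rfl⟩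
    have h0 := hF1 f0 hf0.1
    simp [ev_hstep, h0]
  · rintro _ ⟨⟨f, T, x⟩, ⟨hf, hT, hx⟩, rfl⟩
    obtain ⟨p, hp, hl⟩ := hcov' f hf
    have hle := hmin f hf p hp hl
    obtain ⟨k1, k2⟩ := lemmaK f f0 T x (hF1 f hf.1) (hF1 f0 hf0.1) p.1 hl.2.2
      (fun l' h' => hl0.2.2 l' (lt_of_le_of_lt hle h'))
    by_cases hpp : p = p0
    · subst hpp
      rw [hl.2.1, hl0.2.1, sub_self] at k2
      by_cases h1 : hstep f f0 T x = 1
      · exact Or.inl h1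
      · right
        have hq := hlead _ h1
        refine ⟨lead (hstep f f0 T x), ?_, hq⟩
        refine Multiset.mem_add.2 (Or.inr ?_)
        refine Finset.mem_filter.2 ⟨Finset.mem_image.2 ⟨_, ?_, rfl⟩, ?_⟩
        · exact hF'.mem_toFinset.2 ⟨(f, T, x), ⟨hf, hT, hx⟩, rfl⟩
        · by_contra hlt
          rcases (not_lt.1 hlt).eq_or_lt with h | h
          · rw [h] at k2
            exact hq.1 (hq.2.1.symm.trans k2)
          · exact hq.1 (hq.2.1.symm.trans (k1 _ h))
    · right
      refine ⟨σ p, Multiset.mem_add.2 (Or.inl (Multiset.mem_map_of_mem _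
        ((Multiset.mem_erase_of_ne hpp).2 hp))), ?_⟩
      by_cases hlev : p.1 = p0.1
      · have : σ p = (p.1, p.2 - p0.2) := by simp [σ, hlev]
        rw [this]
        refine ⟨?_, ?_, k1⟩
        · intro h
          exact hpp (Prod.ext hlev (sub_eq_zero.1 h))
        · simp only
          rw [k2, hl.2.1, hlev, hl0.2.1]
      · have : σ p = p := by simp [σ, hlev]
        rw [this]
        refine ⟨hl.1, ?_, k1⟩
        rw [k2, hl.2.1, hl0.2.2 p.1 (lt_of_le_of_ne hle (Ne.symm hlev)), sub_zero]

theorem good_all (F : Set (AG ℤ[X])) (hF : F.Finite) (h1 : ∀ f ∈ F, ev 0 f = 1) :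
    Good (paths F) := by
  classical
  have hlead : ∀ f : AG ℤ[X], ∃ p : Lev × ℤ, f = 1 ∨ Lead f p := by
    intro f
    by_cases h : f = 1
    · exact ⟨(lv 0 0, 0), Or.inl h⟩
    · obtain ⟨l, h1, h2⟩ := exists_lead f h
      exact ⟨(l, coef f l), Or.inr ⟨h1, rfl, h2⟩⟩
  choose lead hlead using hlead
  refine pet _ (hF.toFinset.image lead).val rfl F hF h1 ?_
  intro f hf
  refine (hlead f).imp id fun h => ⟨lead f, ?_, h⟩
  exact Finset.mem_image.2 ⟨f, hF.mem_toFinset.2 hf, rfl⟩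

/-- evaluation of a two-variable polynomial at `(d, t)` -/
noncomputable def ev2 (d t : ℤ) : ℤ[X][X] →+* ℤ := (evalRingHom d).comp (mapRingHom (evalRingHom t))

/-- Nilpotent polynomial van der Waerden on `ℤ × ℤ`. -/
theorem nil_vdw (F : Set (ℤ[X][X] × ℤ[X])) (hF : F.Finite)
    (h1 : ∀ f ∈ F, f.1.map (evalRingHom 0) = 0 ∧ f.2.eval 0 = 0)
    {K : Type*} [Finite K] (c : ℤ → ℤ → K) :
    ∃ a d t : ℤ, 0 < t ∧ ∀ f ∈ F, c (a + ev2 d t f.1) (d + f.2.eval t) = c a d := by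
  have hg := good_all ((fun f : ℤ[X][X] × ℤ[X] => (⟨f.1, f.2⟩ : AG ℤ[X])) '' F) (hF.image _) (by
    rintro _ ⟨f, hf, rfl⟩
    obtain ⟨h, h'⟩ := h1 f hf
    refine AG.ext ?_ ?_
    · simpa [ev] using h
    · simpa [ev] using h')
  obtain ⟨W, N, hN, H⟩ := hg.finite_colors K
  obtain ⟨x, hx, t, ht, hh⟩ := H (fun g => c (g.R.eval 0) g.k)
  refine ⟨x.R.eval 0, x.k, t, by exact_mod_cast hN t ht, fun f hf => ?_⟩
  have := hh _ ⟨_, ⟨f, hf, rfl⟩, rfl⟩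
  simp only [AG.mul_R, AG.mul_k, ev, AG.map_R, AG.map_k, eval_add, taylor_eval, zero_add] at this
  rw [← this]
  simp [ev2, add_comm]

end CPV

namespace CPV
open Polynomial

noncomputable def SQ (q : ℤ[X][X]) : AddSubgroup ℤ[X][X] :=
  AddSubgroup.closure {v | ∃ Y : ℤ[X], Y.eval 0 = 0 ∧ v = taylor Y q - q}

lemma diff_coeff (n : ℕ) (q : ℤ[X][X]) (h : ∀ m > n + 2, q.coeff m = 0) :
    (∀ m > n + 1, (taylor X q - q).coeff m = 0) ∧
    (taylor X q - q).coeff (n + 1) = ((n + 2 : ℕ) : ℤ[X]) * q.coeff (n + 2) * X := by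
  constructor
  · intro m hm
    obtain ⟨t1, t2⟩ := taylor_top (X : ℤ[X]) q (n + 2) h
    rcases (show n + 2 ≤ m from hm).eq_or_lt with rfl | hm
    · rw [coeff_sub, t2, sub_self]
    · rw [coeff_sub, t1 m hm, h m hm, sub_self]
  · obtain ⟨q1, hq1⟩ : ∃ q1, q1 = q - C (q.coeff (n + 2)) * X ^ (n + 2) := ⟨_, rfl⟩
    have h1 : ∀ m > n + 1, q1.coeff m = 0 := by
      intro m hm
      rcases (show n + 2 ≤ m from hm).eq_or_lt with rfl | hm
      · simp [hq1]
      · rw [hq1, coeff_sub, h m hm, coeff_C_mul, coeff_X_pow]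
        simp; omega
    obtain ⟨t1, t2⟩ := taylor_top (X : ℤ[X]) q1 (n + 1) h1
    have hq : q = q1 + C (q.coeff (n + 2)) * X ^ (n + 2) := by rw [hq1]; ring
    have : taylor X q - q = (taylor X q1 - q1) +
        (C (q.coeff (n + 2)) * ((X + C X) ^ (n + 2) - X ^ (n + 2))) := by
      conv_lhs => rw [hq]
      simp only [map_add, taylor_mul, taylor_C, taylor_pow, taylor_X]
      ring
    rw [this, coeff_add, coeff_sub, t2, sub_self, zero_add, coeff_C_mul, coeff_sub,
      coeff_X_add_C_pow, coeff_X_pow]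
    have e1 : n + 2 - (n + 1) = 1 := by omega
    have e2 : (n + 2).choose (n + 1) = n + 2 := Nat.choose_succ_self_right (n + 1)
    rw [e1, e2]
    simp
    ring

lemma SQ_mem (n : ℕ) : ∀ (q : ℤ[X][X]), (∀ m > n + 1, q.coeff m = 0) →
    ∀ Y : ℤ[X], Y.eval 0 = 0 →
    C (((n + 1).factorial : ℤ[X]) * q.coeff (n + 1) * X ^ n * Y) ∈ SQ q := by
  induction n with
  | zero =>
    intro q h Y hY
    apply AddSubgroup.subset_closure
    refine ⟨Y, hY, ?_⟩
    have : q.natDegree ≤ 1 := natDegree_le_iff_coeff_eq_zero.2 h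
    conv_rhs => rw [eq_X_add_C_of_natDegree_le_one this]
    simp only [map_add, taylor_mul, taylor_C, taylor_X, C_mul]
    simp
    ring
  | succ n ih =>
    intro q h Y hY
    obtain ⟨d1, d2⟩ := diff_coeff n q h
    have := ih (taylor X q - q) d1 Y hY
    have hle : SQ (taylor X q - q) ≤ SQ q := by
      refine (AddSubgroup.closure_le _).2 ?_
      rintro _ ⟨Z, hZ, rfl⟩
      have e : taylor Z (taylor X q - q) - (taylor X q - q) =
          (taylor (Z + X) q - q) - (taylor Z q - q) - (taylor X q - q) := by
        rw [map_sub, taylor_taylor]; ring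
      rw [e]
      refine sub_mem (sub_mem ?_ ?_) ?_
      · exact AddSubgroup.subset_closure ⟨Z + X, by simp [hZ], rfl⟩
      · exact AddSubgroup.subset_closure ⟨Z, hZ, rfl⟩
      · exact AddSubgroup.subset_closure ⟨X, by simp, rfl⟩
    have h2 := hle this
    rw [d2] at h2
    convert h2 using 2
    rw [Nat.factorial_succ (n + 1)]
    push_cast
    ring

lemma ev2_map_C (d t : ℤ) (p : ℤ[X]) : ev2 d t (p.map C) = p.eval d := by
  simp only [ev2, RingHom.comp_apply, coe_mapRingHom, Polynomial.map_map, coe_evalRingHom]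
  have : (evalRingHom t).comp C = RingHom.id ℤ := by ext a; simp
  rw [this, Polynomial.map_id]

lemma ev2_taylor (d t : ℤ) (Y : ℤ[X]) (q : ℤ[X][X]) :
    ev2 d t (taylor Y q) = ev2 (d + Y.eval t) t q := by
  simp [ev2, AG.map_taylor', taylor_eval]

lemma ev2_C (d t : ℤ) (p : ℤ[X]) : ev2 d t (C p) = p.eval t := by simp [ev2]

abbrev Van (R : ℤ[X][X]) : Prop := R.map (evalRingHom 0) = 0

lemma van_diff (Y : ℤ[X]) (hY : Y.eval 0 = 0) (q : ℤ[X][X]) : Van (taylor Y q - q) := by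
  simp [Van, AG.map_taylor', hY]

def Edges {K : Type*} (χ : ℤ → K) (pi pj : ℤ[X]) (F : Set (ℤ[X][X] × ℤ[X])) (a d t : ℤ) : Prop :=
  ∀ f ∈ F, χ (a + ev2 d t f.1 + pi.eval (d + f.2.eval t)) =
      χ (a + ev2 d t f.1 + pj.eval (d + f.2.eval t))

def Okay (F : Set (ℤ[X][X] × ℤ[X])) : Prop :=
  F.Finite ∧ ∀ f ∈ F, f.1.map (evalRingHom 0) = 0 ∧ f.2.eval 0 = 0

lemma invar {K : Type*} (χ : ℤ → K) (pi pj : ℤ[X]) (v : ℤ[X][X])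
    (hv : v ∈ SQ ((pj - pi).map C)) :
    Van v ∧ ∀ R, Van R → ∃ F, Okay F ∧ ∀ a d t, Edges χ pi pj F a d t →
      χ (a + pj.eval d + ev2 d t (R + v)) = χ (a + pj.eval d + ev2 d t R) := by
  induction hv using AddSubgroup.closure_induction with
  | mem v hv =>
    obtain ⟨Y, hY, rfl⟩ := hv
    refine ⟨van_diff _ hY _, fun R hR => ?_⟩
    refine ⟨{(R - (taylor Y (pi.map C) - pi.map C), Y), (R, 0)}, ⟨by simp, ?_⟩, ?_⟩
    · intro f hf
      rcases hf with rfl | rfl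
      · refine ⟨?_, hY⟩
        have := van_diff Y hY (pi.map C)
        simp only [Van] at this hR
        rw [Polynomial.map_sub, this, hR, sub_zero]
      · exact ⟨hR, by simp⟩
    · intro a d t h
      have h1 := h _ (Or.inl rfl)
      have h2 := h _ (Or.inr rfl)
      simp only [map_sub, ev2_taylor, ev2_map_C, eval_zero, add_zero] at h1 h2
      simp only [Polynomial.map_sub, map_sub, map_add, ev2_taylor, ev2_map_C]
      have e1 : a + (ev2 d t R - (eval (d + eval t Y) pi - eval d pi)) + eval (d + eval t Y) pi
        = a + ev2 d t R + eval d pi := by ring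
      rw [e1, h2] at h1
      have e2 : a + eval d pj + ev2 d t R = a + ev2 d t R + eval d pj := by ring
      rw [e2, h1]
      congr 1
      ring
  | zero =>
    exact ⟨by simp [Van], fun R _ => ⟨∅, ⟨by simp, by simp⟩, by simp⟩⟩
  | add v w _ _ hv hw =>
    obtain ⟨v1, v2⟩ := hv
    obtain ⟨w1, w2⟩ := hw
    refine ⟨by simp only [Van] at *; rw [Polynomial.map_add, v1, w1, add_zero], fun R hR => ?_⟩
    obtain ⟨F1, o1, k1⟩ := v2 R hR
    obtain ⟨F2, o2, k2⟩ := w2 (R + v) (by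
      simp only [Van] at *; rw [Polynomial.map_add, v1, hR, add_zero])
    refine ⟨F1 ∪ F2, ⟨o1.1.union o2.1, fun f hf => hf.elim (o1.2 f) (o2.2 f)⟩, fun a d t h => ?_⟩
    rw [← add_assoc, k2 a d t (fun f hf => h f (Or.inr hf)),
      k1 a d t (fun f hf => h f (Or.inl hf))]
  | neg v _ hv =>
    obtain ⟨v1, v2⟩ := hv
    refine ⟨by simp only [Van] at *; rw [Polynomial.map_neg, v1, neg_zero], fun R hR => ?_⟩
    obtain ⟨F1, o1, k1⟩ := v2 (R + -v) (by
      simp only [Van] at *; rw [Polynomial.map_add, Polynomial.map_neg, v1, hR]; simp)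
    refine ⟨F1, o1, fun a d t h => ?_⟩
    rw [← k1 a d t h]
    congr 3
    ring

lemma final_pair {K : Type*} (χ : ℤ → K) (pi pj : ℤ[X]) (hne : pi ≠ pj)
    (hi : pi.eval 0 = 0) (hj : pj.eval 0 = 0) :
    ∃ e : ℤ[X], (∀ t : ℤ, 0 < t → e.eval t ≠ 0) ∧ ∀ r : ℤ[X], r.eval 0 = 0 →
      ∃ F, Okay F ∧ ∀ a d t, Edges χ pi pj F a d t →
        χ (a + pj.eval d + r.eval (e.eval t)) = χ (a + pj.eval d) := by
  have hq : pj - pi ≠ 0 := sub_ne_zero.2 hne.symm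
  have hdeg : (pj - pi).natDegree ≠ 0 := by
    intro h
    rw [natDegree_eq_zero] at h
    obtain ⟨c, hc⟩ := h
    have : (pj - pi).eval 0 = 0 := by simp [hi, hj]
    rw [← hc, eval_C] at this
    rw [← hc, this] at hq
    simp at hq
  obtain ⟨n, hn⟩ := Nat.exists_eq_succ_of_ne_zero hdeg
  have hmem := SQ_mem n ((pj - pi).map C) (by
    intro m hm
    rw [coeff_map, coeff_eq_zero_of_natDegree_lt (by omega), C_0])
  set D : ℤ[X] := ((n + 1).factorial : ℤ[X]) * ((pj - pi).map C).coeff (n + 1) * X ^ n with hD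
  have hDt : ∀ t : ℤ, 0 < t → D.eval t ≠ 0 := by
    intro t ht
    have hl : (pj - pi).coeff (n + 1) ≠ 0 := by
      rw [← Nat.succ_eq_add_one, ← hn]
      simpa using hq
    rw [hD, coeff_map]
    simp only [eval_mul, eval_natCast, eval_C, eval_pow, eval_X]
    exact mul_ne_zero (mul_ne_zero (by exact_mod_cast Nat.factorial_ne_zero _) hl)
      (pow_ne_zero _ ht.ne')
  refine ⟨D * X, fun t ht => ?_, fun r hr => ?_⟩
  · rw [eval_mul, eval_X]
    exact mul_ne_zero (hDt t ht) ht.ne'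
  · obtain ⟨s, hs⟩ : X ∣ r := by rw [X_dvd_iff, coeff_zero_eq_eval_zero, hr]
    have h := hmem (X * s.comp (D * X)) (by simp)
    obtain ⟨-, h2⟩ := invar χ pi pj _ h
    obtain ⟨F, oF, kF⟩ := h2 0 (by simp [Van])
    refine ⟨F, oF, fun a d t hE => ?_⟩
    have := kF a d t hE
    rw [zero_add, map_zero, add_zero, ev2_C] at this
    rw [← this, hs]
    congr 2
    simp only [eval_mul, eval_X, eval_comp]
    ring

theorem main_result {k : ℕ} (p : Fin k → Polynomial ℤ)
    (hp0 : ∀ i, (p i).eval 0 = 0) (hpne : ∀ i, p i ≠ 0)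
    (hpdist : ∀ i j, i ≠ j → p i ≠ p j)
    {C : Type*} (χ : ℤ → C) :
    ∃ a d : ℤ, d ≠ 0 ∧
      ((∀ i : Fin k, χ (a + (p i).eval d) = χ a) ∨
       ((Function.Injective fun i : Fin k => a + (p i).eval d) ∧
        (∀ i : Fin k, a + (p i).eval d ≠ a) ∧
        (Function.Injective fun i : Fin k => χ (a + (p i).eval d)) ∧
        (∀ i : Fin k, χ (a + (p i).eval d) ≠ χ a))) := by
  classical
  rcases isEmpty_or_nonempty (Fin k) with hk | ⟨⟨i0⟩⟩
  · exact ⟨0, 1, one_ne_zero, Or.inl fun i => hk.elim i⟩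
  by_contra hcon
  push Not at hcon
  let P : Option (Fin k) → ℤ[X] := fun o => o.elim 0 p
  have hP0 : ∀ o, (P o).eval 0 = 0 := by
    rintro (_ | i)
    · simp [P]
    · exact hp0 i
  have hPinj : ∀ o o', o ≠ o' → P o ≠ P o' := by
    rintro (_ | i) (_ | j) h
    · exact (h rfl).elim
    · exact (hpne j).symm
    · exact hpne i
    · exact hpdist i j (fun hij => h (by rw [hij]))
  let E : Set ℤ := ⋃ o : Option (Fin k), ⋃ o' : Option (Fin k),
    {d | o ≠ o' ∧ (P o).eval d = (P o').eval d}
  have hE : E.Finite := by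
    refine Set.finite_iUnion fun o => Set.finite_iUnion fun o' => ?_
    by_cases h : o = o'
    · simp [h]
    · refine ((P o - P o').roots.toFinset.finite_toSet).subset ?_
      rintro d ⟨-, hd⟩
      simp only [Finset.mem_coe, Multiset.mem_toFinset, mem_roots', IsRoot, eval_sub]
      exact ⟨sub_ne_zero.2 (hPinj o o' h), sub_eq_zero.2 hd⟩
  obtain ⟨B, hB⟩ := (hE.image (fun d => |d|)).bddAbove
  have hB' : ∀ d ∈ E, |d| ≤ B := fun d hd => hB ⟨d, hd, rfl⟩
  have hpair : ∀ a d : ℤ, d ∉ E → ∃ q : Option (Fin k) × Option (Fin k), q.1 ≠ q.2 ∧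
      χ (a + (P q.1).eval d) = χ (a + (P q.2).eval d) := by
    intro a d hd
    by_contra hno
    push Not at hno
    have hdE : ∀ o o', o ≠ o' → (P o).eval d ≠ (P o').eval d := by
      intro o o' h h'
      exact hd (Set.mem_iUnion.2 ⟨o, Set.mem_iUnion.2 ⟨o', h, h'⟩⟩)
    have hd0 : d ≠ 0 := by
      rintro rfl
      exact hdE none (some i0) (by simp) (by rw [hP0, hP0])
    obtain ⟨i, hi⟩ := (hcon a d hd0).2
      (by
        intro i j hij
        by_contra hne
        exact hdE (some i) (some j) (by simpa using hne) (add_left_cancel hij))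
      (by
        intro i h
        exact hdE (some i) none (by simp) (by
          have : (p i).eval d = 0 := by linarith
          simp [P, this]))
      (by
        intro i j hij
        by_contra hne
        exact hno (some i, some j) (by simpa using hne) hij)
    exact hno (some i, none) (by simp) (by simpa [P] using hi)
  let c : ℤ → ℤ → Option (Option (Fin k) × Option (Fin k)) := fun a d =>
    if h : d ∉ E then some (hpair a d h).choose else none
  have key : ∀ q : Option (Fin k) × Option (Fin k), ∃ e : ℤ[X], q.1 ≠ q.2 →
      (∀ t : ℤ, 0 < t → e.eval t ≠ 0) ∧ ∀ r : ℤ[X], r.eval 0 = 0 →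
      ∃ F, Okay F ∧ ∀ a d t, Edges χ (P q.1) (P q.2) F a d t →
        χ (a + (P q.2).eval d + r.eval (e.eval t)) = χ (a + (P q.2).eval d) := by
    intro q
    by_cases h : q.1 = q.2
    · exact ⟨0, fun h' => (h' h).elim⟩
    · obtain ⟨e, he⟩ := final_pair χ (P q.1) (P q.2) (hPinj _ _ h) (hP0 _) (hP0 _)
      exact ⟨e, fun _ => he⟩
  choose e he using key
  have key2 : ∀ (q : Option (Fin k) × Option (Fin k)) (i : Fin k), ∃ F, Okay F ∧ (q.1 ≠ q.2 →
      ∀ a d t, Edges χ (P q.1) (P q.2) F a d t →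
        χ (a + (P q.2).eval d + (p i).eval ((e q).eval t)) = χ (a + (P q.2).eval d)) := by
    intro q i
    by_cases h : q.1 = q.2
    · exact ⟨∅, ⟨by simp, by simp⟩, fun h' => (h' h).elim⟩
    · obtain ⟨F, o, hF⟩ := (he q h).2 (p i) (hp0 i)
      exact ⟨F, o, fun _ => hF⟩
  choose F hF hFk using key2
  obtain ⟨a, d, t, ht, hmono⟩ := nil_vdw
    ((⋃ q, ⋃ i, F q i) ∪ {((0 : ℤ[X][X]), Polynomial.C (2 * |B| + 1) * X)})
    ((Set.finite_iUnion fun q => Set.finite_iUnion fun i => (hF q i).1).union (by simp))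
    (by
      rintro f (hf | rfl)
      · obtain ⟨q, hf⟩ := Set.mem_iUnion.1 hf
        obtain ⟨i, hf⟩ := Set.mem_iUnion.1 hf
        exact (hF q i).2 f hf
      · simp) c
  have hdE : d ∉ E := by
    intro hd
    have h1 := hmono _ (Or.inr rfl)
    have hd2 : d + (Polynomial.C (2 * |B| + 1) * X : ℤ[X]).eval t ∈ E := by
      by_contra h
      simp only [c] at h1
      rw [dif_pos h, dif_neg (by simpa using hd)] at h1
      simp at h1
    have b1 := abs_le.1 (hB' _ hd)
    have b2 := abs_le.1 (hB' _ hd2)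
    simp only [eval_mul, eval_C, eval_X] at b2
    have b3 := le_abs_self B
    nlinarith [abs_nonneg B]
  obtain ⟨q, hq⟩ : ∃ q, q = (hpair a d hdE).choose := ⟨_, rfl⟩
  have hqne : q.1 ≠ q.2 := by rw [hq]; exact (hpair a d hdE).choose_spec.1
  have hc : c a d = some q := by simp only [c]; rw [dif_pos hdE, hq]
  have hedge : ∀ a' d', c a' d' = some q →
      χ (a' + (P q.1).eval d') = χ (a' + (P q.2).eval d') := by
    intro a' d' h
    simp only [c] at h
    split_ifs at h with hd'
    have h := Option.some.inj h
    rw [← h]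
    exact (hpair a' d' hd').choose_spec.2
  obtain ⟨i, hi⟩ := (hcon (a + (P q.2).eval d) ((e q).eval t) ((he q hqne).1 t ht)).1
  apply hi
  refine hFk q i hqne a d t ?_
  intro f hf
  apply hedge
  rw [hmono f (Or.inl (Set.mem_iUnion.2 ⟨q, Set.mem_iUnion.2 ⟨i, hf⟩⟩)), hc]

end CPV


/-- **Canonical polynomial Van der Waerden theorem.**
Let `p 1, ..., p k` be pairwise distinct nonzero integral polynomials (integer
coefficients, vanishing at `0`).  Then for every colouring `χ : ℤ → C` with an
arbitrary (possibly infinite) set of colours `C`, there exist `a d : ℤ` with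
`d ≠ 0` such that either `χ` takes the same value on all of
`a, a + p 1 d, ..., a + p k d` (monochromatic), or these integers are pairwise
distinct and `χ` takes pairwise distinct values on them (rainbow). -/
theorem canonical_polynomial_vdw {k : ℕ} (p : Fin k → Polynomial ℤ)
    (hp0 : ∀ i, (p i).eval 0 = 0) (hpne : ∀ i, p i ≠ 0)
    (hpdist : ∀ i j, i ≠ j → p i ≠ p j)
    {C : Type*} (χ : ℤ → C) :
    ∃ a d : ℤ, d ≠ 0 ∧
      ((∀ i : Fin k, χ (a + (p i).eval d) = χ a) ∨
       ((Function.Injective fun i : Fin k => a + (p i).eval d) ∧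
        (∀ i : Fin k, a + (p i).eval d ≠ a) ∧
        (Function.Injective fun i : Fin k => χ (a + (p i).eval d)) ∧
        (∀ i : Fin k, χ (a + (p i).eval d) ≠ χ a))) := by
  exact CPV.main_result p hp0 hpne hpdist χ
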